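/- Let C be a cluster of Q (a maximal compatible subset of Ψ(Q)_{≥−1}) and let α = Σ_{c∈C} λ_c c with all λ_c positive integers, and set σ = ⟨α,·⟩. Then the only σ-semi-stable representation of Q is the zero representation. -/

import Mathlib

set_option autoImplicit false

noncomputable section

open scoped BigOperators

/-! Basic setup for representations of a quiver with vertex set `V`, arrow set `A`,
tail map `t` and head map `h`, over a field `K`. -/

variable (K : Type) [Field K]
variable {V A : Type} [Fintype V] [DecidableEq V] [Fintype A]

/-- The Euler form of the quiver `(V, A, t, h)`. -/
def eulerForm {R : Type} [CommRing R] (t h : A → V) (x y : V → R) : R :=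
  ∑ i, x i * y i - ∑ a, x (t a) * y (h a)

def natZ (x : V → ℕ) : V → ℤ := fun i => (x i : ℤ)
def intQ (x : V → ℤ) : V → ℚ := fun i => (x i : ℚ)
def natQ (x : V → ℕ) : V → ℚ := fun i => (x i : ℚ)

/-- The weight `⟨α,·⟩`. -/
def weightL (t h : A → V) (α : V → ℤ) : V → ℤ :=
  fun i => eulerForm t h α (fun j => if j = i then 1 else 0)

/-- The weight `−⟨·,α⟩`. -/
def weightR (t h : A → V) (α : V → ℤ) : V → ℤ :=
  fun i => - eulerForm t h (fun j => if j = i then 1 else 0) α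

/-- `IsPathFrom t h i p j` : the list of arrows `p` is a path from `i` to `j`. -/
def IsPathFrom (t h : A → V) : V → List A → V → Prop
  | i, [], j => i = j
  | i, a :: p, j => t a = i ∧ IsPathFrom t h (h a) p j

/-- The quiver has no (nontrivial) oriented cycles. -/
def Acyclic (t h : A → V) : Prop := ∀ (i : V) (p : List A), IsPathFrom t h i p i → p = []

/-- The dimension vector `γ_i` of the projective indecomposable at `i`:
`γ_i(j)` is the number of paths from `i` to `j`. -/
def gammaRoot (t h : A → V) (i : V) : V → ℕ :=
  fun j => Set.ncard {p : List A | IsPathFrom t h i p j}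

/-- A finite-dimensional representation of the quiver `(V, A, t, h)` over `K`. -/
structure QuivRep (K : Type) [Field K] (V A : Type) (t h : A → V) : Type 1 where
  sp : V → Type
  [inst1 : ∀ i, AddCommGroup (sp i)]
  [inst2 : ∀ i, Module K (sp i)]
  [inst3 : ∀ i, FiniteDimensional K (sp i)]
  map : ∀ a : A, sp (t a) →ₗ[K] sp (h a)

attribute [instance] QuivRep.inst1 QuivRep.inst2 QuivRep.inst3

namespace QuivRep

variable {K} {t h : A → V}

/-- The dimension vector of a representation. -/
def dimVec (X : QuivRep K V A t h) : V → ℕ := fun i => Module.finrank K (X.sp i)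

/-- A subrepresentation. -/
structure Sub (X : QuivRep K V A t h) where
  sub : ∀ i, Submodule K (X.sp i)
  le : ∀ a : A, ∀ x ∈ sub (t a), X.map a x ∈ sub (h a)

/-- The dimension vector of a subrepresentation. -/
def Sub.dimVec {X : QuivRep K V A t h} (U : Sub X) : V → ℕ :=
  fun i => Module.finrank K (U.sub i)

/-- The space `Hom_Q(X,Y)` of morphisms of representations, as a submodule of
`Π i, Hom_K(X(i),Y(i))`. -/
def homS (X Y : QuivRep K V A t h) : Submodule K (∀ i, X.sp i →ₗ[K] Y.sp i) where
  carrier := {φ | ∀ a : A, (φ (h a)).comp (X.map a) = (Y.map a).comp (φ (t a))}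
  zero_mem' := by intro a; simp
  add_mem' := by
    intro f g hf hg a
    simp only [Pi.add_apply, LinearMap.add_comp, LinearMap.comp_add, hf a, hg a]
  smul_mem' := by
    intro c f hf a
    simp only [Pi.smul_apply, LinearMap.smul_comp, LinearMap.comp_smul, hf a]

/-- The dimension of `Hom_Q(X,Y)`. -/
def homDim (X Y : QuivRep K V A t h) : ℕ := Module.finrank K (homS X Y)

/-- The map `d^X_Y` from Ringel's canonical exact sequence. -/
def dmap (X Y : QuivRep K V A t h) :
    (∀ i, X.sp i →ₗ[K] Y.sp i) →ₗ[K] (∀ a : A, X.sp (t a) →ₗ[K] Y.sp (h a)) where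
  toFun φ := fun a => (φ (h a)).comp (X.map a) - (Y.map a).comp (φ (t a))
  map_add' f g := by
    funext a
    simp only [Pi.add_apply, LinearMap.add_comp, LinearMap.comp_add]
    abel
  map_smul' c f := by
    funext a
    simp only [Pi.smul_apply, LinearMap.smul_comp, LinearMap.comp_smul, smul_sub,
      RingHom.id_apply]

/-- The dimension of `Ext^1_Q(X,Y)`, i.e. of the cokernel of `d^X_Y`. -/
def extDim (X Y : QuivRep K V A t h) : ℕ :=
  Module.finrank K ((∀ a : A, X.sp (t a) →ₗ[K] Y.sp (h a)) ⧸ LinearMap.range (dmap X Y))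

/-- A rigid representation: `Ext^1_Q(X,X) = 0`. -/
def IsRigid (X : QuivRep K V A t h) : Prop := extDim X X = 0

/-- A Schur representation: `End_Q(X) = K·id`. -/
def IsSchur (X : QuivRep K V A t h) : Prop := homDim X X = 1

/-- An exceptional representation: rigid and Schur. -/
def IsExceptional (X : QuivRep K V A t h) : Prop := IsRigid X ∧ IsSchur X

end QuivRep

/-- `β` is a real Schur root: the dimension vector of an exceptional representation. -/
def isRealSchurRoot (t h : A → V) (β : V → ℕ) : Prop :=
  ∃ X : QuivRep K V A t h, X.dimVec = β ∧ X.IsExceptional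

/-- `ext_Q(α,β)` : the generic (minimal) value of `dim Ext^1_Q` on pairs of
representations of dimension vectors `α`, `β`. -/
def extMin (t h : A → V) (α β : V → ℕ) : ℕ :=
  sInf {n | ∃ X Y : QuivRep K V A t h, X.dimVec = α ∧ Y.dimVec = β ∧ QuivRep.extDim X Y = n}

/-- `hom_Q(α,β)` : the generic (minimal) value of `dim Hom_Q`. -/
def homMin (t h : A → V) (α β : V → ℕ) : ℕ :=
  sInf {n | ∃ X Y : QuivRep K V A t h, X.dimVec = α ∧ Y.dimVec = β ∧ QuivRep.homDim X Y = n}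

/-- `β' ↪ β` : every representation of dimension vector `β` has a subrepresentation of
dimension vector `β'`. -/
def Embeds (t h : A → V) (β' β : V → ℕ) : Prop :=
  ∀ X : QuivRep K V A t h, X.dimVec = β → ∃ U : QuivRep.Sub X, U.dimVec = β'

/-- `σ`-semi-stability of a representation. -/
def IsSemistable {t h : A → V} (σ : V → ℤ) (X : QuivRep K V A t h) : Prop :=
  (∑ i, σ i * (X.dimVec i : ℤ)) = 0 ∧
  ∀ U : QuivRep.Sub X, (∑ i, σ i * (U.dimVec i : ℤ)) ≤ 0

/-- `σ`-stability of a representation. -/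
def IsStable {t h : A → V} (σ : V → ℤ) (X : QuivRep K V A t h) : Prop :=
  (∑ i, σ i * (X.dimVec i : ℤ)) = 0 ∧ X.dimVec ≠ (fun _ => 0) ∧
  ∀ U : QuivRep.Sub X, U.dimVec ≠ (fun _ => 0) → U.dimVec ≠ X.dimVec →
    (∑ i, σ i * (U.dimVec i : ℤ)) < 0

/-- Isomorphism of representations. -/
def RepIso {t h : A → V} (X Y : QuivRep K V A t h) : Prop :=
  ∃ e : ∀ i, X.sp i ≃ₗ[K] Y.sp i,
    ∀ (a : A) (x : X.sp (t a)), e (h a) (X.map a x) = Y.map a (e (t a) x)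

/-- A quiver exceptional sequence of dimension vectors. -/
def IsQES (t h : A → V) {l : ℕ} (b : Fin l → V → ℕ) : Prop :=
  (∀ j, isRealSchurRoot K t h (b j)) ∧
  ∀ i j : Fin l, i < j →
    homMin K t h (b i) (b j) = 0 ∧ extMin K t h (b i) (b j) = 0 ∧
      eulerForm t h (natZ (b j)) (natZ (b i)) ≤ 0

/-- The cone of nonnegative rational linear combinations of a finite set of integral
vectors. -/
def coneOf (C : Finset (V → ℤ)) : Set (V → ℚ) :=
  {x | ∃ lam : (V → ℤ) → ℚ, (∀ c, 0 ≤ lam c) ∧ x = ∑ c ∈ C, lam c • intQ c}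

/-- A compatible subset of the set `Ψ(Q)_{≥ -1}` of almost positive real Schur roots. -/
def IsCompatible (t h : A → V) (C : Finset (V → ℤ)) : Prop :=
  (∀ x ∈ C, (∃ β : V → ℕ, isRealSchurRoot K t h β ∧ x = natZ β) ∨
      (∃ i : V, x = fun j => -(gammaRoot t h i j : ℤ))) ∧
  (∀ x ∈ C, ∀ y ∈ C, x ≠ y →
    (∀ β₁ β₂ : V → ℕ, isRealSchurRoot K t h β₁ → isRealSchurRoot K t h β₂ →
      x = natZ β₁ → y = natZ β₂ → extMin K t h β₁ β₂ = 0) ∧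
    (∀ (β : V → ℕ) (i : V), isRealSchurRoot K t h β →
      x = natZ β → y = (fun j => -(gammaRoot t h i j : ℤ)) → β i = 0))

/-- The domain of semi-invariants `D(β) ⊆ ℚ^{Q_0}`. -/
def Dom (t h : A → V) (β : V → ℕ) : Set (V → ℚ) :=
  {x | eulerForm t h x (natQ β) = 0 ∧
    ∀ β' : V → ℕ, Embeds K t h β' β → eulerForm t h x (natQ β') ≤ 0}

/-- A quiver exceptional set: a subset of `Ψ(Q)_{≥ -1}` of the form
`{β_1,…,β_l, −γ_{i_{l+1}},…,−γ_{i_m}}` with `β_j(i_k) = 0` and whose real-Schur-root part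
can be ordered into a quiver exceptional sequence. -/
def IsQExcSet (t h : A → V) (E : Finset (V → ℤ)) : Prop :=
  ∃ (l m : ℕ) (b : Fin l → V → ℕ) (g : Fin m → V),
    Function.Injective b ∧ Function.Injective g ∧ IsQES K t h b ∧
    (∀ j k, b j (g k) = 0) ∧
    (E : Set (V → ℤ)) =
      (Set.range fun j => natZ (b j)) ∪
      (Set.range fun k => (fun v => -(gammaRoot t h (g k) v : ℤ)))


/-- The underlying graph of the quiver is connected. -/
def IsConnectedQuiver (t h : A → V) : Prop :=
  ∀ i j : V,
    Relation.ReflTransGen (fun u v => ∃ a, (t a = u ∧ h a = v) ∨ (t a = v ∧ h a = u)) i j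

/-- Morphisms of representations. -/
structure RepHom {K : Type} [Field K] {V A : Type} {t h : A → V}
    (X Y : QuivRep K V A t h) : Type where
  app : ∀ i, X.sp i →ₗ[K] Y.sp i
  comm : ∀ a : A, (app (h a)).comp (X.map a) = (Y.map a).comp (app (t a))

namespace RepHom

variable {K₀ : Type} [Field K₀] {t h : A → V}

/-- The identity morphism. -/
def idHom (X : QuivRep K₀ V A t h) : RepHom X X :=
  ⟨fun _ => LinearMap.id, fun a => by ext x; simp⟩

/-- Composition of morphisms. -/
def comp {X Y Z : QuivRep K₀ V A t h} (f : RepHom X Y) (g : RepHom Y Z) : RepHom X Z :=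
  ⟨fun i => (g.app i).comp (f.app i), fun a => by
    ext x
    have hf := LinearMap.congr_fun (f.comm a) x
    have hg := LinearMap.congr_fun (g.comm a) (f.app (t a) x)
    simp only [LinearMap.comp_apply] at hf hg ⊢
    rw [hf, hg]⟩

/-- Sum of morphisms. -/
def add {X Y : QuivRep K₀ V A t h} (f g : RepHom X Y) : RepHom X Y :=
  ⟨fun i => f.app i + g.app i, fun a => by
    simp only [LinearMap.add_comp, LinearMap.comp_add, f.comm a, g.comm a]⟩

/-- Scalar multiple of a morphism. -/
def smul {X Y : QuivRep K₀ V A t h} (c : K₀) (f : RepHom X Y) : RepHom X Y :=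
  ⟨fun i => c • f.app i, fun a => by
    simp only [LinearMap.smul_comp, LinearMap.comp_smul, f.comm a]⟩

end RepHom

/-- The number of arrows `i → j` in the Ext-quiver `Q(𝓔)` of a sequence of dimension
vectors: `−⟨β_i, β_j⟩` for `i ≠ j`. -/
def extMult (t h : A → V) {l : ℕ} (b : Fin l → V → ℕ) (i j : Fin l) : ℕ :=
  if i = j then 0 else (-(eulerForm t h (natZ (b i)) (natZ (b j)))).toNat

/-- The arrow set of the Ext-quiver `Q(𝓔)`. -/
abbrev ExtArrow (t h : A → V) {l : ℕ} (b : Fin l → V → ℕ) : Type :=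
  (i : Fin l) × (j : Fin l) × Fin (extMult t h b i j)

/-- The representation space `rep(Q,β)` as a product of matrix spaces. -/
abbrev RepSpace (t h : A → V) (β : V → ℕ) : Type :=
  ∀ a : A, Matrix (Fin (β (h a))) (Fin (β (t a))) K

/-- The (base-change) action of `GL(β)` on `rep(Q,β)`. -/
def glAct (t h : A → V) {β : V → ℕ}
    (g : ∀ i, Matrix.GeneralLinearGroup (Fin (β i)) K) (W : RepSpace K t h β) :
    RepSpace K t h β :=
  fun a => (g (h a) : Matrix (Fin (β (h a))) (Fin (β (h a))) K) * W a *
    (((g (t a))⁻¹ : Matrix.GeneralLinearGroup (Fin (β (t a))) K) :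
      Matrix (Fin (β (t a))) (Fin (β (t a))) K)

/-- A polynomial function on `rep(Q,β)`. -/
def IsPolyFun (t h : A → V) {β : V → ℕ} (f : RepSpace K t h β → K) : Prop :=
  ∃ P : MvPolynomial ((a : A) × (Fin (β (h a)) × Fin (β (t a)))) K,
    ∀ W, f W = MvPolynomial.eval (fun x => W x.1 x.2.1 x.2.2) P

/-- The weight space `SI(Q,β)_σ` of semi-invariant polynomial functions of weight `σ`. -/
def SIweight (t h : A → V) (β : V → ℕ) (σ : V → ℤ) :
    Submodule K (RepSpace K t h β → K) where
  carrier := {f | IsPolyFun K t h f ∧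
    ∀ (g : ∀ i, Matrix.GeneralLinearGroup (Fin (β i)) K) (W : RepSpace K t h β),
      f (glAct K t h g W) =
        (((∏ i, (Matrix.GeneralLinearGroup.det (g i)) ^ σ i : Kˣ) : K)) * f W}
  zero_mem' := by
    refine ⟨⟨0, by simp⟩, by simp⟩
  add_mem' := by
    rintro f g ⟨⟨P, hP⟩, hf⟩ ⟨⟨Q, hQ⟩, hg⟩
    refine ⟨⟨P + Q, fun W => ?_⟩, fun gg W => ?_⟩
    · simp [hP W, hQ W]
    · simp only [Pi.add_apply, hf gg W, hg gg W]; ring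
  smul_mem' := by
    rintro c f ⟨⟨P, hP⟩, hf⟩
    refine ⟨⟨MvPolynomial.C c * P, fun W => ?_⟩, fun gg W => ?_⟩
    · simp [hP W]
    · simp only [Pi.smul_apply, hf gg W, smul_eq_mul]; ring

/-- Entry of a matrix accessed through natural-number indices. -/
def entryN {m n : ℕ} (M : Matrix (Fin m) (Fin n) K) (r c : ℕ) : K :=
  if hr : r < m then (if hc : c < n then M ⟨r, hr⟩ ⟨c, hc⟩ else 0) else 0

/-- The matrix of the map `d^V_W` (with `V` of dimension vector `α` varying and `W` of
dimension vector `w` fixed), in the standard bases. -/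
def schofieldMatrix (t h : A → V) {α w : V → ℕ}
    (Vm : RepSpace K t h α) (W : RepSpace K t h w) :
    Matrix ((a : A) × (Fin (w (h a)) × Fin (α (t a)))) ((i : V) × (Fin (w i) × Fin (α i))) K :=
  fun r c =>
    (if c.1 = h r.1 ∧ (c.2.1 : ℕ) = (r.2.1 : ℕ) then
      entryN K (Vm r.1) (c.2.2 : ℕ) (r.2.2 : ℕ) else 0)
    - (if c.1 = t r.1 ∧ (c.2.2 : ℕ) = (r.2.2 : ℕ) then
      entryN K (W r.1) (r.2.1 : ℕ) (c.2.1 : ℕ) else 0)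

/-- The Schofield semi-invariant `c_W : rep(Q,α) → K`, `V ↦ det d^V_W` (defined when
`⟨α, dim W⟩ = 0`, i.e. when `d^V_W` is a square matrix). -/
def schofieldSI (t h : A → V) {α w : V → ℕ} (W : RepSpace K t h w)
    (Vm : RepSpace K t h α) : K :=
  if hc : Fintype.card ((i : V) × (Fin (w i) × Fin (α i))) =
      Fintype.card ((a : A) × (Fin (w (h a)) × Fin (α (t a)))) then
    ((schofieldMatrix K t h Vm W).submatrix (Fintype.equivOfCardEq hc) id).det
  else 0

/-- The representation of `Q` attached to a point of `rep(Q,β)`. -/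
def toRep (t h : A → V) {β : V → ℕ} (W : RepSpace K t h β) : QuivRep K V A t h where
  sp i := Fin (β i) → K
  map a := Matrix.mulVecLin (W a)

/-!
Realize the real Schur roots in `C` by exceptional representations `R j`; as exceptional orbits are
generic, compatibility gives `Ext(R j, R k) = 0`. If `W` is semi-stable, every `Hom(R j, W)`
vanishes, because the image of a nonzero morphism would be a subrepresentation of positive weight.
So `⟨c, dim W⟩ ≤ 0` for all `c ∈ C`; these numbers have a positive combination equal to zero, hence
vanish, that is, `Ext(R j, W) = 0` and `W i = 0` whenever `-γ_i ∈ C`.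

If `W ≠ 0`, there is a nonzero morphism to `W` from an indecomposable projective of the quiver
without the vertices `i`, and it extends to Bongartz's universal extension of that projective by the
`R j`, which is rigid and compatible with `C`. Among the rigid representations compatible with `C`
which map nontrivially to `W` without extensions by `W`, one of minimal dimension is exceptional, by
the Happel–Ringel lemma. By maximality its dimension vector lies in `C`, although its Euler form
with `dim W` is positive.
-/

section Pencil

omit [Fintype V] [DecidableEq V] [Fintype A]

variable {K} {M N : Type*} [AddCommGroup M] [Module K M] [AddCommGroup N] [Module K N]
  [FiniteDimensional K N]

-- With `R` a right inverse of `D + s₀ E`, one has `(D + s E) R = 1 + (s - s₀) E R`, which is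
-- invertible unless `-(s - s₀)⁻¹` is an eigenvalue of `E R`.
theorem finite_setOf_not_surjective_add_smul {D E : M →ₗ[K] N} {s₀ : K}
    (hs₀ : Function.Surjective (D + s₀ • E)) :
    {s : K | ¬ Function.Surjective (D + s • E)}.Finite := by
  obtain ⟨R, hR⟩ := (D + s₀ • E).exists_rightInverse_of_surjective
    (LinearMap.range_eq_top.mpr hs₀)
  refine ((Module.End.finite_hasEigenvalue (E ∘ₗ R)).image (s₀ - ·⁻¹)).subset fun s hs => ?_
  have apply_R : ∀ y, (D + s • E) (R y) = y + (s - s₀) • E (R y) := fun y => by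
    conv_rhs => enter [1]; rw [← LinearMap.id_apply (R := K) y, ← hR]
    simp only [LinearMap.comp_apply, LinearMap.add_apply, LinearMap.smul_apply]
    module
  obtain ⟨y, hy, hy0⟩ : ∃ y, y + (s - s₀) • E (R y) = 0 ∧ y ≠ 0 := by
    have not_inj : ¬ Function.Injective ((D + s • E) ∘ₗ R) := fun hinj =>
      hs (Function.Surjective.of_comp (LinearMap.injective_iff_surjective.mp hinj))
    simpa only [injective_iff_map_eq_zero, LinearMap.comp_apply, apply_R, not_forall,
      exists_prop] using not_inj
  have hne : s - s₀ ≠ 0 := sub_ne_zero.mpr fun heq => hs (heq ▸ hs₀)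
  refine ⟨-(s - s₀)⁻¹, Module.End.hasEigenvalue_of_hasEigenvector (x := y) ⟨?_, hy0⟩, by simp⟩
  rw [Module.End.mem_eigenspace_iff, LinearMap.comp_apply, neg_smul, ← smul_neg,
    eq_inv_smul_iff₀ hne]
  exact eq_neg_of_add_eq_zero_right hy

end Pencil

namespace QuivRep

open Function

section Morphisms

omit [Fintype V] [DecidableEq V] [Fintype A]

variable {K} {t h : A → V} {X Y Z : QuivRep K V A t h}

theorem mem_homS_iff {φ : ∀ i, X.sp i →ₗ[K] Y.sp i} :
    φ ∈ homS X Y ↔ ∀ a x, φ (h a) (X.map a x) = Y.map a (φ (t a) x) :=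
  forall_congr' fun _ => LinearMap.ext_iff

theorem homS_apply_map (f : homS X Y) (a : A) (x : X.sp (t a)) :
    f.1 (h a) (X.map a x) = Y.map a (f.1 (t a) x) :=
  mem_homS_iff.mp f.2 a x

theorem homS_ne_zero_of_apply_ne_zero {f : homS X Y} {v : V} {x : X.sp v} (hx : f.1 v x ≠ 0) :
    f ≠ 0 := by
  rintro rfl
  exact hx rfl

theorem exists_apply_ne_zero_of_homS_ne_zero {f : homS X Y} (hf : f ≠ 0) :
    ∃ v x, f.1 v x ≠ 0 := by
  contrapose! hf
  exact Subtype.ext (funext fun v => LinearMap.ext (hf v))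

theorem exists_ne_zero_of_homDim_ne_zero (h0 : homDim X Y ≠ 0) : ∃ f : homS X Y, f ≠ 0 :=
  have : Nontrivial (homS X Y) :=
    Module.nontrivial_of_finrank_pos (R := K) (Nat.pos_of_ne_zero h0)
  exists_ne 0

theorem homDim_pos_of_ne_zero [Finite V] {f : homS X Y} (hf : f ≠ 0) : 0 < homDim X Y :=
  have : Nontrivial (homS X Y) := nontrivial_of_ne f 0 hf
  Module.finrank_pos

/-- The identity morphism of `X`, as an element of `Hom_Q(X,X)`. -/
def homId (X : QuivRep K V A t h) : homS X X :=
  ⟨fun _ => LinearMap.id, mem_homS_iff.mpr fun _ _ => rfl⟩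

/-- Composition of morphisms, in the order of function composition. -/
def homComp (g : homS Y Z) (f : homS X Y) : homS X Z :=
  ⟨fun i => g.1 i ∘ₗ f.1 i, mem_homS_iff.mpr fun a x => by
    simp only [LinearMap.comp_apply, homS_apply_map]⟩

/-- The inverse of a morphism that is bijective at every vertex. -/
def homInv (f : homS X Y) (hf : ∀ v, Bijective (f.1 v)) : homS Y X :=
  ⟨fun i => (LinearEquiv.ofBijective (f.1 i) (hf i)).symm, mem_homS_iff.mpr fun a y => by
    apply (hf (h a)).injective
    obtain ⟨x, rfl⟩ := (hf (t a)).surjective y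
    have cancel : ∀ i z, f.1 i ((LinearEquiv.ofBijective (f.1 i) (hf i)).symm z) = z :=
      fun i z => (LinearEquiv.ofBijective (f.1 i) (hf i)).apply_symm_apply z
    simp only [LinearEquiv.coe_coe, cancel, homS_apply_map]⟩

theorem homInv_apply (f : homS X Y) (hf : ∀ v, Bijective (f.1 v)) (v : V) (x : X.sp v) :
    (homInv f hf).1 v (f.1 v x) = x :=
  (LinearEquiv.ofBijective (f.1 v) (hf v)).symm_apply_apply x

theorem homInv_bijective (f : homS X Y) (hf : ∀ v, Bijective (f.1 v)) (v : V) :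
    Bijective ((homInv f hf).1 v) :=
  (LinearEquiv.ofBijective (f.1 v) (hf v)).symm.bijective

/-- The image of a morphism, as a representation in its own right. -/
def image (f : homS X Y) : QuivRep K V A t h where
  sp i := LinearMap.range (f.1 i)
  map a := (Y.map a).restrict (by
    rintro _ ⟨x, rfl⟩
    exact ⟨X.map a x, homS_apply_map f a x⟩)

/-- The inclusion of the image of a morphism into its target. -/
def imageIncl (f : homS X Y) : homS (image f) Y :=
  ⟨fun i => (LinearMap.range (f.1 i)).subtype, mem_homS_iff.mpr fun _ _ => rfl⟩

/-- The corestriction of a morphism to its image. -/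
def imageProj (f : homS X Y) : homS X (image f) :=
  ⟨fun i => (f.1 i).rangeRestrict,
    mem_homS_iff.mpr fun a x => Subtype.ext (homS_apply_map f a x)⟩

theorem imageIncl_injective (f : homS X Y) (v : V) : Injective ((imageIncl f).1 v) :=
  Subtype.val_injective

theorem imageProj_surjective (f : homS X Y) (v : V) : Surjective ((imageProj f).1 v) :=
  LinearMap.surjective_rangeRestrict _

theorem dimVec_image_le (f : homS X Y) : (image f).dimVec ≤ X.dimVec :=
  fun v => LinearMap.finrank_range_le (f.1 v)

theorem injective_of_dimVec_image_eq {f : homS X Y} {v : V}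
    (hf : (image f).dimVec v = X.dimVec v) : Injective (f.1 v) := by
  have hrank := LinearMap.finrank_range_add_finrank_ker (f.1 v)
  rw [show Module.finrank K (LinearMap.range (f.1 v)) = Module.finrank K (X.sp v) from hf] at hrank
  exact LinearMap.ker_eq_bot.mp (Submodule.finrank_eq_zero.mp (Nat.add_eq_left.mp hrank))

end Morphisms

section Ext

omit [Fintype V] [DecidableEq V] [Fintype A]

variable [Finite A] {K} {t h : A → V} {X X' Y Y' I : QuivRep K V A t h}

theorem extDim_eq_zero_iff_surjective : extDim X Y = 0 ↔ Surjective (dmap X Y) := by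
  rw [extDim, Module.finrank_zero_iff, Submodule.Quotient.subsingleton_iff,
    LinearMap.range_eq_top]

theorem extDim_eq_zero_iff : extDim X Y = 0 ↔
    ∀ c : ∀ a, X.sp (t a) →ₗ[K] Y.sp (h a), ∃ φ : ∀ i, X.sp i →ₗ[K] Y.sp i,
      ∀ a x, φ (h a) (X.map a x) - Y.map a (φ (t a) x) = c a x := by
  simp only [extDim_eq_zero_iff_surjective, Surjective, funext_iff, LinearMap.ext_iff]
  rfl

theorem extDim_eq_zero_of_surjective (p : homS Y Y') (hp : ∀ v, Surjective (p.1 v))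
    (hXY : extDim X Y = 0) : extDim X Y' = 0 := by
  rw [extDim_eq_zero_iff] at hXY ⊢
  intro c
  choose s hs using fun v => (p.1 v).exists_rightInverse_of_surjective
    (LinearMap.range_eq_top.mpr (hp v))
  obtain ⟨φ, hφ⟩ := hXY fun a => s (h a) ∘ₗ c a
  refine ⟨fun i => p.1 i ∘ₗ φ i, fun a x => ?_⟩
  calc p.1 (h a) (φ (h a) (X.map a x)) - Y'.map a (p.1 (t a) (φ (t a) x))
      = p.1 (h a) (φ (h a) (X.map a x) - Y.map a (φ (t a) x)) := by
        rw [map_sub, homS_apply_map]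
    _ = p.1 (h a) (s (h a) (c a x)) := congrArg _ (hφ a x)
    _ = c a x := LinearMap.congr_fun (hs (h a)) (c a x)

theorem extDim_eq_zero_of_bijective (f : homS Y' Y) (hf : ∀ v, Bijective (f.1 v))
    (hXY : extDim X Y = 0) : extDim X Y' = 0 :=
  extDim_eq_zero_of_surjective (homInv f hf) (fun v => (homInv_bijective f hf v).surjective) hXY

theorem extDim_eq_zero_of_injective (j : homS X' X) (hj : ∀ v, Injective (j.1 v))
    (hXY : extDim X Y = 0) : extDim X' Y = 0 := by
  rw [extDim_eq_zero_iff] at hXY ⊢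
  intro c
  choose r hr using fun v => (j.1 v).exists_leftInverse_of_injective
    (LinearMap.ker_eq_bot.mpr (hj v))
  obtain ⟨φ, hφ⟩ := hXY fun a => c a ∘ₗ r (t a)
  refine ⟨fun i => φ i ∘ₗ j.1 i, fun a x => ?_⟩
  calc φ (h a) (j.1 (h a) (X'.map a x)) - Y.map a (φ (t a) (j.1 (t a) x))
      = φ (h a) (X.map a (j.1 (t a) x)) - Y.map a (φ (t a) (j.1 (t a) x)) := by
        rw [homS_apply_map]
    _ = c a (r (t a) (j.1 (t a) x)) := hφ a _
    _ = c a x := congrArg (c a) (LinearMap.congr_fun (hr (t a)) x)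

/-- An endomorphism ring in which `f` or `1 - f` is always invertible. Injectivity stands for
invertibility, since the spaces are finite-dimensional. The zero representation is allowed. -/
def HasLocalEnd (X : QuivRep K V A t h) : Prop :=
  ∀ f : homS X X, (∀ v, Injective (f.1 v)) ∨ ∀ v, Injective ((homId X - f).1 v)

-- Heredity: the extension `0 → ker π → X → I → 0` is the pullback along `ι` of an extension of `Y`,
-- which is trivialised by `Ext(Y,X) = 0`.
theorem exists_comp_add_comp_eq_id (π : homS X I) (hπ : ∀ v, Surjective (π.1 v))
    (ι : homS I Y) (hι : ∀ v, Injective (ι.1 v)) (hYX : extDim Y X = 0) :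
    ∃ (i : homS I X) (p : homS Y I), ∀ v x, π.1 v (i.1 v x) + p.1 v (ι.1 v x) = x := by
  choose s hs using fun v => (π.1 v).exists_rightInverse_of_surjective
    (LinearMap.range_eq_top.mpr (hπ v))
  choose r hr using fun v => (ι.1 v).exists_leftInverse_of_injective
    (LinearMap.ker_eq_bot.mpr (hι v))
  replace hs : ∀ v x, π.1 v (s v x) = x := fun v => LinearMap.congr_fun (hs v)
  replace hr : ∀ v x, r v (ι.1 v x) = x := fun v => LinearMap.congr_fun (hr v)
  obtain ⟨j, hj⟩ := extDim_eq_zero_iff.mp hYX fun a => s (h a) ∘ₗ dmap Y I r a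
  replace hj : ∀ a y, j (h a) (Y.map a y) - X.map a (j (t a) y) =
      s (h a) (r (h a) (Y.map a y) - I.map a (r (t a) y)) := hj
  have hi : (fun v => j v ∘ₗ ι.1 v) ∈ homS I X := mem_homS_iff.mpr fun a x => by
    have := hj a (ι.1 (t a) x)
    rwa [← homS_apply_map, hr, hr, sub_self, map_zero, sub_eq_zero] at this
  have hp : (fun v => r v - π.1 v ∘ₗ j v) ∈ homS Y I := mem_homS_iff.mpr fun a y => by
    have := congrArg (π.1 (h a)) (hj a y)
    rw [hs, map_sub, homS_apply_map] at this
    simp only [LinearMap.sub_apply, LinearMap.comp_apply, map_sub]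
    exact sub_eq_sub_iff_sub_eq_sub.mpr this.symm
  refine ⟨⟨_, hi⟩, ⟨_, hp⟩, fun v x => ?_⟩
  simp only [LinearMap.sub_apply, LinearMap.comp_apply, hr, add_sub_cancel]

-- The Happel–Ringel lemma. If `f` is not onto, `1 - ι p` is invertible, so `π i` is an automorphism
-- of the image and `i (π i)⁻¹ π` is an idempotent endomorphism of `X`.
theorem injective_or_surjective (hX : HasLocalEnd X) (hY : HasLocalEnd Y) (hYX : extDim Y X = 0)
    {f : homS X Y} (hf : f ≠ 0) : (∀ v, Injective (f.1 v)) ∨ ∀ v, Surjective (f.1 v) := by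
  by_contra! hcon
  obtain ⟨⟨v, hv⟩, w, hw⟩ := hcon
  let π := imageProj f
  let ι := imageIncl f
  have hπ : ∀ v, Surjective (π.1 v) := imageProj_surjective f
  have hι : ∀ v, Injective (ι.1 v) := imageIncl_injective f
  obtain ⟨i, p, hip⟩ := exists_comp_add_comp_eq_id π hπ ι hι hYX
  have sub_inj : ∀ v, Injective ((homId Y - homComp ι p).1 v) :=
    (hY (homComp ι p)).resolve_left fun hinj => by
      have hιp : Surjective (ι.1 w ∘ p.1 w) := LinearMap.injective_iff_surjective.mp (hinj w)
      exact hw (hιp.of_comp.comp (hπ w))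
  have πi_inj : ∀ v, Injective ((homComp π i).1 v) := fun v =>
    (injective_iff_map_eq_zero _).mpr fun x (hx : π.1 v (i.1 v x) = 0) => by
      have hpι : p.1 v (ι.1 v x) = x := by simpa only [hx, zero_add] using hip v x
      have : ι.1 v x - ι.1 v (p.1 v (ι.1 v x)) = 0 := by rw [hpι, sub_self]
      exact (map_eq_zero_iff _ (hι v)).mp ((map_eq_zero_iff _ (sub_inj v)).mp this)
  let g := homInv (homComp π i) fun v =>
    ⟨πi_inj v, LinearMap.injective_iff_surjective.mp (πi_inj v)⟩
  let e := homComp i (homComp g π)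
  have one_sub_e_inj : ∀ v, Injective ((homId X - e).1 v) :=
    (hX e).resolve_left fun hinj => by
      have igπ_inj : Injective (i.1 v ∘ g.1 v ∘ π.1 v) := hinj v
      exact hv ((hι v).comp igπ_inj.of_comp.of_comp)
  have i_eq_zero : ∀ v x, i.1 v x = 0 := fun v x => by
    have hg : g.1 v (π.1 v (i.1 v x)) = x := homInv_apply (homComp π i) _ v x
    have : i.1 v x - i.1 v (g.1 v (π.1 v (i.1 v x))) = 0 := by rw [hg, sub_self]
    exact (map_eq_zero_iff _ (one_sub_e_inj v)).mp this
  obtain ⟨u, x, hx⟩ := exists_apply_ne_zero_of_homS_ne_zero hf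
  refine hx (congrArg (ι.1 u) ?_ : ι.1 u (π.1 u x) = ι.1 u 0)
  apply (map_eq_zero_iff _ (πi_inj u)).mp
  exact (congrArg (π.1 u) (i_eq_zero u _)).trans (map_zero _)

theorem bijective_of_dimVec_eq (hX : HasLocalEnd X) (hY : HasLocalEnd Y) (hYX : extDim Y X = 0)
    (hdim : X.dimVec = Y.dimVec) {f : homS X Y} (hf : f ≠ 0) (v : V) : Bijective (f.1 v) := by
  have iff : Injective (f.1 v) ↔ Surjective (f.1 v) :=
    LinearMap.injective_iff_surjective_of_finrank_eq_finrank (congrFun hdim v)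
  rcases injective_or_surjective hX hY hYX hf with hinj | hsurj
  · exact ⟨hinj v, iff.mp (hinj v)⟩
  · exact ⟨iff.mpr (hsurj v), hsurj v⟩

end Ext

section EulerForm

omit [DecidableEq V]

variable {K} {t h : A → V} {X Y : QuivRep K V A t h}

theorem eulerForm_eq_homDim_sub_extDim :
    eulerForm t h (natZ X.dimVec) (natZ Y.dimVec) = (homDim X Y : ℤ) - extDim X Y := by
  have hker : homS X Y = LinearMap.ker (dmap X Y) := by
    ext φ
    simp only [LinearMap.mem_ker, funext_iff]
    exact forall_congr' fun a => sub_eq_zero.symm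
  have hrank := LinearMap.finrank_range_add_finrank_ker (dmap X Y)
  have hcoker := Submodule.finrank_quotient_add_finrank (LinearMap.range (dmap X Y))
  rw [← hker] at hrank
  simp only [Module.finrank_pi_fintype, Module.finrank_linearMap] at hrank hcoker
  have hrank_int := congrArg (Nat.cast (R := ℤ)) hrank
  have hcoker_int := congrArg (Nat.cast (R := ℤ)) hcoker
  push_cast at hrank_int hcoker_int
  simp only [eulerForm, natZ, dimVec, homDim, extDim]
  linarith

theorem eulerForm_sum_smul_left {ι : Type*} (s : Finset ι) (c : ι → ℤ) (x : ι → V → ℤ)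
    (y : V → ℤ) :
    eulerForm t h (∑ j ∈ s, c j • x j) y = ∑ j ∈ s, c j * eulerForm t h (x j) y := by
  simp only [eulerForm, Finset.sum_apply, Pi.smul_apply, smul_eq_mul, mul_sub, Finset.mul_sum,
    Finset.sum_mul, Finset.sum_sub_distrib, mul_assoc]
  rw [Finset.sum_comm, Finset.sum_comm (s := Finset.univ (α := A))]

end EulerForm

section Exceptional

omit [Fintype V] [DecidableEq V] [Fintype A]

variable {K} {t h : A → V} {X : QuivRep K V A t h}

theorem homId_ne_zero (hX : X.dimVec ≠ 0) : homId X ≠ 0 := by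
  obtain ⟨v, hv⟩ := ne_iff.mp hX
  have : Nontrivial (X.sp v) := Module.nontrivial_of_finrank_pos (Nat.pos_of_ne_zero hv)
  obtain ⟨x, hx⟩ := exists_ne (0 : X.sp v)
  exact homS_ne_zero_of_apply_ne_zero hx

theorem IsSchur.exists_eq_smul (hX : IsSchur X) (f : homS X X) : ∃ c : K, c • homId X = f := by
  have : Nontrivial (homS X X) := Module.nontrivial_of_finrank_pos (hX.symm ▸ Nat.one_pos)
  obtain ⟨g, hg⟩ := exists_ne (0 : homS X X)
  obtain ⟨v, x, hx⟩ := exists_apply_ne_zero_of_homS_ne_zero hg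
  have hid : homId X ≠ 0 :=
    homS_ne_zero_of_apply_ne_zero (x := x) fun h0 : x = 0 => hx (by rw [h0, map_zero])
  exact (finrank_eq_one_iff_of_nonzero' (homId X) hid).mp hX f

theorem IsSchur.hasLocalEnd (hX : IsSchur X) : HasLocalEnd X := by
  have smul_injective : ∀ c : K, c ≠ 0 → ∀ v, Injective ((c • homId X).1 v) := fun c hc v =>
    smul_right_injective (X.sp v) hc
  intro f
  obtain ⟨c, rfl⟩ := hX.exists_eq_smul f
  by_cases hc : c = 0
  · right
    rw [hc, zero_smul, sub_zero]
    exact fun v => injective_id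
  · exact .inl (smul_injective c hc)

/-- The algebra `End_Q(X)`. -/
def endAlgebra (X : QuivRep K V A t h) : Subalgebra K (∀ i, Module.End K (X.sp i)) where
  __ := homS X X
  mul_mem' {f g} hf hg := (homComp ⟨f, hf⟩ ⟨g, hg⟩).2
  algebraMap_mem' c := (c • homId X).2

theorem homDim_dvd_dimVec [Finite V] (hdim : X.dimVec ≠ 0)
    (hX : ∀ f : homS X X, f ≠ 0 → ∀ v, Injective (f.1 v)) (v : V) : homDim X X ∣ X.dimVec v := by
  have : Nontrivial (endAlgebra X) := nontrivial_of_ne (homId X) 0 (homId_ne_zero hdim)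
  have : NoZeroDivisors (endAlgebra X) := ⟨fun {f g} hfg => or_iff_not_imp_left.mpr fun hf => by
    refine Subtype.ext (funext fun u => LinearMap.ext fun x => hX f hf u ?_)
    exact (LinearMap.congr_fun (congrFun (congrArg Subtype.val hfg) u) x).trans (map_zero _).symm⟩
  have : IsDomain (endAlgebra X) := NoZeroDivisors.to_isDomain _
  let := divisionRingOfFiniteDimensional K (endAlgebra X)
  let : Module (endAlgebra X) (X.sp v) := Module.compHom (X.sp v)
    ((Pi.evalRingHom _ v).comp (endAlgebra X).val.toRingHom)
  have : IsScalarTower K (endAlgebra X) (X.sp v) := ⟨fun c f x => rfl⟩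
  exact ⟨_, (Module.finrank_mul_finrank K (endAlgebra X) (X.sp v)).symm⟩

end Exceptional

section ExceptionalOfEulerForm

omit [Fintype V] [DecidableEq V] [Fintype A]

variable [Finite V] [Finite A] {K} {t h : A → V} {X Y : QuivRep K V A t h}

-- Every `X v` is a vector space over the division algebra `End_Q(X)`, so `d = dim End_Q(X)` divides
-- `dim X`; since `X` is rigid, `d = ⟨dim X, dim X⟩` is divisible by `d ^ 2`.
theorem isSchur_of_injective_of_extDim_eq_zero (hdim : X.dimVec ≠ 0)
    (hX : ∀ f : homS X X, f ≠ 0 → ∀ v, Injective (f.1 v)) (hXX : extDim X X = 0) : IsSchur X := by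
  have := Fintype.ofFinite V
  have := Fintype.ofFinite A
  choose β hβ using homDim_dvd_dimVec hdim hX
  set d := homDim X X
  have hd0 : (d : ℤ) ≠ 0 := by
    obtain ⟨v, hv⟩ := ne_iff.mp hdim
    exact_mod_cast left_ne_zero_of_mul (hβ v ▸ hv)
  have euler_eq : (d : ℤ) * (d * eulerForm t h (natZ β) (natZ β)) = d := by
    calc (d : ℤ) * (d * eulerForm t h (natZ β) (natZ β))
        = eulerForm t h (natZ X.dimVec) (natZ X.dimVec) := by
          simp only [eulerForm, natZ, hβ, Nat.cast_mul, mul_sub, Finset.mul_sum, mul_assoc,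
            mul_left_comm]
      _ = d := by rw [eulerForm_eq_homDim_sub_extDim, hXX, Nat.cast_zero, sub_zero]
  have hunit : (d : ℤ) * eulerForm t h (natZ β) (natZ β) = 1 :=
    mul_left_cancel₀ hd0 (euler_eq.trans (mul_one _).symm)
  exact Nat.dvd_one.mp (Int.natCast_dvd_natCast.mp ⟨_, hunit.symm⟩)

theorem IsExceptional.exists_bijective (hX : IsExceptional X) (hY : IsExceptional Y)
    (hdim : X.dimVec = Y.dimVec) (hYX : extDim Y X = 0) :
    ∃ f : homS X Y, ∀ v, Bijective (f.1 v) := by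
  have := Fintype.ofFinite V
  have := Fintype.ofFinite A
  have hXY : (homDim X Y : ℤ) - extDim X Y = 1 := by
    calc (homDim X Y : ℤ) - extDim X Y = (homDim X X : ℤ) - extDim X X := by
          rw [← eulerForm_eq_homDim_sub_extDim, ← eulerForm_eq_homDim_sub_extDim, hdim]
      _ = 1 := by rw [hX.1, hX.2]; rfl
  obtain ⟨f, hf⟩ := exists_ne_zero_of_homDim_ne_zero (X := X) (Y := Y) (by lia)
  exact ⟨f, bijective_of_dimVec_eq hX.2.hasLocalEnd hY.2.hasLocalEnd hYX hdim hf⟩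

end ExceptionalOfEulerForm

section Genericity

omit [Fintype V] [DecidableEq V] [Fintype A]

variable {K} {t h : A → V} {X Y : QuivRep K V A t h}

/-- The representation with the spaces of `X` and the linear maps `m`. -/
abbrev withMap (X : QuivRep K V A t h) (m : ∀ a, X.sp (t a) →ₗ[K] X.sp (h a)) :
    QuivRep K V A t h where
  sp := X.sp
  map := m

/-- The point with parameter `s` on the line through `X` with direction `B` in the space of
representations on the spaces of `X`. -/
abbrev line (X : QuivRep K V A t h) (B : ∀ a, X.sp (t a) →ₗ[K] X.sp (h a)) (s : K) :
    QuivRep K V A t h :=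
  X.withMap (X.map + s • B)

theorem line_zero_right (X : QuivRep K V A t h) (B : ∀ a, X.sp (t a) →ₗ[K] X.sp (h a)) :
    X.line B 0 = X := by
  rw [line, zero_smul, add_zero]

theorem line_zero_left (X : QuivRep K V A t h) (s : K) : X.line 0 s = X := by
  rw [line, smul_zero, add_zero]

theorem dmap_line (B : ∀ a, X.sp (t a) →ₗ[K] X.sp (h a)) (B' : ∀ a, Y.sp (t a) →ₗ[K] Y.sp (h a))
    (s : K) :
    dmap (X.line B s) (Y.line B' s) = dmap X Y + s • dmap (X.withMap B) (Y.withMap B') := by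
  ext φ a x
  change φ (h a) (X.map a x + s • B a x) - (Y.map a (φ (t a) x) + s • B' a (φ (t a) x)) =
    φ (h a) (X.map a x) - Y.map a (φ (t a) x) + s • (φ (h a) (B a x) - B' a (φ (t a) x))
  rw [map_add, map_smul, smul_sub, add_sub_add_comm]

theorem exists_bijective_line_one {X' : QuivRep K V A t h} (hdim : X.dimVec = X'.dimVec) :
    ∃ B, ∃ f : homS (X.line B 1) X', ∀ v, Bijective (f.1 v) := by
  have e : ∀ v, X.sp v ≃ₗ[K] X'.sp v := fun v => LinearEquiv.ofFinrankEq _ _ (congrFun hdim v)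
  refine ⟨fun a => (e (h a)).symm ∘ₗ X'.map a ∘ₗ e (t a) - X.map a,
    ⟨fun v => e v, mem_homS_iff.mpr fun a x => ?_⟩, fun v => (e v).bijective⟩
  change e (h a) (X.map a x + (1 : K) • ((e (h a)).symm (X'.map a (e (t a) x)) - X.map a x)) = _
  rw [one_smul, add_sub_cancel, LinearEquiv.apply_symm_apply]
  rfl

theorem finite_setOf_extDim_line_ne_zero [Finite A] {B : ∀ a, X.sp (t a) →ₗ[K] X.sp (h a)}
    {B' : ∀ a, Y.sp (t a) →ₗ[K] Y.sp (h a)} {s₀ : K}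
    (hs₀ : extDim (X.line B s₀) (Y.line B' s₀) = 0) :
    {s | extDim (X.line B s) (Y.line B' s) ≠ 0}.Finite := by
  simp only [extDim_eq_zero_iff_surjective, ne_eq, dmap_line] at hs₀ ⊢
  exact finite_setOf_not_surjective_add_smul hs₀

end Genericity

section ExceptionalGeneric

omit [Fintype V] [DecidableEq V] [Fintype A]

variable [Finite V] [Finite A] {K} {t h : A → V} {X X' Y Y' : QuivRep K V A t h}

theorem IsExceptional.of_dimVec_eq (hX : IsExceptional X) (hdim : Y.dimVec = X.dimVec)
    (hY : extDim Y Y = 0) : IsExceptional Y := by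
  have := Fintype.ofFinite V
  have := Fintype.ofFinite A
  refine ⟨hY, ?_⟩
  have : (homDim Y Y : ℤ) - extDim Y Y = homDim X X - extDim X X := by
    rw [← eulerForm_eq_homDim_sub_extDim, ← eulerForm_eq_homDim_sub_extDim, hdim]
  rw [hY, hX.1, hX.2] at this
  change homDim Y Y = 1
  lia

theorem IsExceptional.finite_setOf_not_exists_bijective_line (hX : IsExceptional X)
    (B : ∀ a, X.sp (t a) →ₗ[K] X.sp (h a)) :
    {s | ¬ ∃ f : homS X (X.line B s), ∀ v, Bijective (f.1 v)}.Finite := by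
  have hself : extDim (X.line B 0) (X.line B 0) = 0 := by rw [line_zero_right]; exact hX.1
  have hleft : extDim (X.line B 0) (X.line 0 0) = 0 := by
    rw [line_zero_right, line_zero_left]; exact hX.1
  refine ((finite_setOf_extDim_line_ne_zero hself).union
    (finite_setOf_extDim_line_ne_zero hleft)).subset fun s hs => ?_
  by_contra hgood
  simp only [Set.mem_union, Set.mem_ofPred_eq, not_or, not_not, line_zero_left] at hgood
  have hline : IsExceptional (X.line B s) := hX.of_dimVec_eq rfl hgood.1
  exact hs (hX.exists_bijective hline rfl hgood.2)

theorem IsExceptional.extDim_eq_zero_left [Infinite K] (hX : IsExceptional X)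
    (hdim : X.dimVec = X'.dimVec) (hX' : extDim X' Y = 0) : extDim X Y = 0 := by
  obtain ⟨B, f, hf⟩ := exists_bijective_line_one hdim
  have hB : extDim (X.line B 1) (Y.line 0 1) = 0 := by
    rw [line_zero_left]
    exact extDim_eq_zero_of_injective f (fun v => (hf v).injective) hX'
  obtain ⟨s, hs⟩ := ((finite_setOf_extDim_line_ne_zero hB).union
    (hX.finite_setOf_not_exists_bijective_line B)).exists_notMem
  simp only [Set.mem_union, Set.mem_ofPred_eq, not_or, not_not, line_zero_left] at hs
  obtain ⟨hsY, g, hg⟩ := hs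
  exact extDim_eq_zero_of_injective g (fun v => (hg v).injective) hsY

theorem IsExceptional.extDim_eq_zero_right [Infinite K] (hY : IsExceptional Y)
    (hdim : Y.dimVec = Y'.dimVec) (hY' : extDim X Y' = 0) : extDim X Y = 0 := by
  obtain ⟨B, f, hf⟩ := exists_bijective_line_one hdim
  have hB : extDim (X.line 0 1) (Y.line B 1) = 0 := by
    rw [line_zero_left]
    exact extDim_eq_zero_of_bijective f hf hY'
  obtain ⟨s, hs⟩ := ((finite_setOf_extDim_line_ne_zero hB).union
    (hY.finite_setOf_not_exists_bijective_line B)).exists_notMem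
  simp only [Set.mem_union, Set.mem_ofPred_eq, not_or, not_not, line_zero_left] at hs
  obtain ⟨hsX, g, hg⟩ := hs
  exact extDim_eq_zero_of_bijective g hg hsX

theorem IsExceptional.extMin_eq_zero_iff [Infinite K] (hX : IsExceptional X)
    (hY : IsExceptional Y) : extMin K t h X.dimVec Y.dimVec = 0 ↔ extDim X Y = 0 := by
  constructor
  · intro hmin
    obtain ⟨X', Y', hX', hY', hext⟩ := Nat.sInf_mem (s := {n | ∃ X' Y' : QuivRep K V A t h,
      X'.dimVec = X.dimVec ∧ Y'.dimVec = Y.dimVec ∧ extDim X' Y' = n}) ⟨_, X, Y, rfl, rfl, rfl⟩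
    exact hX.extDim_eq_zero_left hX'.symm (hY.extDim_eq_zero_right hY'.symm (hext.trans hmin))
  · exact fun hext => Nat.le_zero.mp (Nat.sInf_le ⟨X, Y, rfl, rfl, hext⟩)

end ExceptionalGeneric

section Extension

omit [Fintype V] [DecidableEq V] [Fintype A]

variable {K} {t h : A → V} {X T Y : QuivRep K V A t h}

/-- The extension of `T` by `X` with cocycle `ξ`, in which `X` is a subrepresentation. -/
abbrev extension (X T : QuivRep K V A t h) (ξ : ∀ a, T.sp (t a) →ₗ[K] X.sp (h a)) :
    QuivRep K V A t h where
  sp i := X.sp i × T.sp i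
  map a := ((X.map a).coprod (ξ a)).prod (T.map a ∘ₗ LinearMap.snd K _ _)

variable [Finite A] {ξ : ∀ a, T.sp (t a) →ₗ[K] X.sp (h a)}

theorem exists_extend_to_extension (hTY : extDim T Y = 0)
    {c : ∀ a, (extension X T ξ).sp (t a) →ₗ[K] Y.sp (h a)} {φ : ∀ i, X.sp i →ₗ[K] Y.sp i}
    (hφ : ∀ a x, φ (h a) (X.map a x) - Y.map a (φ (t a) x) = c a (x, 0)) :
    ∃ Φ : ∀ i, (extension X T ξ).sp i →ₗ[K] Y.sp i, (∀ i x, Φ i (x, 0) = φ i x) ∧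
      ∀ a x, Φ (h a) ((extension X T ξ).map a x) - Y.map a (Φ (t a) x) = c a x := by
  obtain ⟨ψ, hψ⟩ := extDim_eq_zero_iff.mp hTY fun a =>
    c a ∘ₗ LinearMap.inr K _ _ - φ (h a) ∘ₗ ξ a
  refine ⟨fun i => (φ i).coprod (ψ i), fun i x => ?_, fun a x => ?_⟩
  · simp only [LinearMap.coprod_apply, map_zero, add_zero]
  · obtain ⟨x, τ⟩ := x
    have hψτ : ψ (h a) (T.map a τ) - Y.map a (ψ (t a) τ) = c a (0, τ) - φ (h a) (ξ a τ) := hψ a τ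
    have hc : c a (x, τ) = c a (x, 0) + c a (0, τ) := by
      rw [← map_add, Prod.mk_add_mk, add_zero, zero_add]
    change φ (h a) (X.map a x + ξ a τ) + ψ (h a) (T.map a τ) - Y.map a (φ (t a) x + ψ (t a) τ) = _
    rw [map_add, map_add, hc, ← hφ, ← eq_sub_iff_add_eq.mp hψτ]
    abel

theorem extDim_extension_left (hXY : extDim X Y = 0) (hTY : extDim T Y = 0) :
    extDim (extension X T ξ) Y = 0 := by
  refine extDim_eq_zero_iff.mpr fun c => ?_
  obtain ⟨φ, hφ⟩ := extDim_eq_zero_iff.mp hXY fun a => c a ∘ₗ LinearMap.inl K _ _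
  obtain ⟨Φ, -, hΦ⟩ := exists_extend_to_extension hTY hφ
  exact ⟨Φ, hΦ⟩

theorem exists_homS_extension_ne_zero (hTY : extDim T Y = 0) {f : homS X Y} (hf : f ≠ 0) :
    ∃ F : homS (extension X T ξ) Y, F ≠ 0 := by
  obtain ⟨Φ, hΦf, hΦ⟩ := exists_extend_to_extension (ξ := ξ) (c := 0) (φ := f.1) hTY
    fun a x => sub_eq_zero.mpr (homS_apply_map f a x)
  obtain ⟨v, x, hx⟩ := exists_apply_ne_zero_of_homS_ne_zero hf
  refine ⟨⟨Φ, mem_homS_iff.mpr fun a x => sub_eq_zero.mp (hΦ a x)⟩, ?_⟩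
  exact homS_ne_zero_of_apply_ne_zero (ne_of_eq_of_ne (hΦf v x) hx)

-- The hypothesis on `ξ` makes the connecting map `Hom(S,T) → Ext(S,X)` surjective.
theorem extDim_extension_right {S : QuivRep K V A t h} (hST : extDim S T = 0)
    (hξ : ∀ η : ∀ a, S.sp (t a) →ₗ[K] X.sp (h a), ∃ θ : homS S T, ∀ a, ξ a ∘ₗ θ.1 (t a) = η a) :
    extDim S (extension X T ξ) = 0 := by
  refine extDim_eq_zero_iff.mpr fun c => ?_
  obtain ⟨ψ, hψ⟩ := extDim_eq_zero_iff.mp hST fun a => LinearMap.snd K _ _ ∘ₗ c a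
  obtain ⟨θ, hθ⟩ := hξ fun a => LinearMap.fst K _ _ ∘ₗ c a + ξ a ∘ₗ ψ (t a)
  refine ⟨fun i => LinearMap.inr K _ _ ∘ₗ (ψ i - θ.1 i), fun a s => Prod.ext ?_ ?_⟩
  · have hθs : ξ a (θ.1 (t a) s) = (c a s).1 + ξ a (ψ (t a) s) := LinearMap.congr_fun (hθ a) s
    change 0 - (X.map a 0 + ξ a (ψ (t a) s - θ.1 (t a) s)) = (c a s).1
    rw [map_zero, zero_add, map_sub, hθs]
    abel
  · have hψs : ψ (h a) (S.map a s) - T.map a (ψ (t a) s) = (c a s).2 := hψ a s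
    change ψ (h a) (S.map a s) - θ.1 (h a) (S.map a s) - T.map a (ψ (t a) s - θ.1 (t a) s) = _
    rw [homS_apply_map, map_sub, sub_sub_sub_cancel_right, hψs]

end Extension

section Pi

omit [Fintype V] [DecidableEq V] [Fintype A]

variable {K} {t h : A → V} {ι : Type} [Finite ι] {R : ι → QuivRep K V A t h}
  {Y : QuivRep K V A t h}

/-- The direct sum of a finite family of representations. -/
abbrev pi (R : ι → QuivRep K V A t h) : QuivRep K V A t h where
  sp i := ∀ j, (R j).sp i
  map a := LinearMap.pi fun j => (R j).map a ∘ₗ LinearMap.proj j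

/-- The inclusion of a summand into a direct sum. -/
def homSingle [DecidableEq ι] (R : ι → QuivRep K V A t h) (j : ι) : homS (R j) (pi R) :=
  ⟨fun i => LinearMap.single K (fun j => (R j).sp i) j, mem_homS_iff.mpr fun a x => by
    funext k
    exact (Pi.apply_single (fun j => (R j).map a) (fun j => map_zero _) j x k).symm⟩

variable [Finite A]

theorem extDim_pi_right (hR : ∀ j, extDim Y (R j) = 0) : extDim Y (pi R) = 0 := by
  simp only [extDim_eq_zero_iff] at hR ⊢
  intro c
  choose φ hφ using fun j => hR j fun a => LinearMap.proj j ∘ₗ c a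
  exact ⟨fun i => LinearMap.pi fun j => φ j i, fun a y => funext fun j => hφ j a y⟩

theorem extDim_pi_left (hR : ∀ j, extDim (R j) Y = 0) : extDim (pi R) Y = 0 := by
  classical
  have := Fintype.ofFinite ι
  simp only [extDim_eq_zero_iff] at hR ⊢
  intro c
  choose φ hφ using fun j => hR j fun a => c a ∘ₗ (homSingle R j).1 (t a)
  refine ⟨fun i => ∑ j, φ j i ∘ₗ LinearMap.proj j, fun a x => ?_⟩
  calc _ = ∑ j, (φ j (h a) ((R j).map a (x j)) - Y.map a (φ j (t a) (x j))) := by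
        simp only [LinearMap.sum_apply, map_sum, Finset.sum_sub_distrib]
        rfl
    _ = ∑ j, c a (Pi.single j (x j)) := Finset.sum_congr rfl fun j _ => hφ j a (x j)
    _ = c a x := by rw [← map_sum]; exact congrArg (c a) (Finset.univ_sum_single x)

end Pi

section UniversalExtension

omit [Fintype V] [DecidableEq V] [Fintype A]

variable [Finite A] {K} {t h : A → V} {ι : Type} [Fintype ι] {R : ι → QuivRep K V A t h}
  {X Y : QuivRep K V A t h}

/-- The copies of the `R j` used by `universalExtension`: one for each member of a basis of the
cocycles of extensions of `R j` by `X`. -/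
abbrev CocycleIndex (X : QuivRep K V A t h) (R : ι → QuivRep K V A t h) : Type :=
  Σ j, Fin (Module.finrank K (∀ a, (R j).sp (t a) →ₗ[K] X.sp (h a)))

/-- Bongartz's universal extension of `X` by copies of the `R j`. It is glued along a basis of all
cocycles, where a basis of `Ext(R j, X)` would give a smaller representation. -/
abbrev universalExtension (X : QuivRep K V A t h) (R : ι → QuivRep K V A t h) :
    QuivRep K V A t h :=
  extension X (pi fun p : CocycleIndex X R => R p.1) fun a =>
    ∑ p : CocycleIndex X R, Module.finBasis K _ p.2 a ∘ₗ LinearMap.proj p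

theorem extDim_universalExtension_left (hXY : extDim X Y = 0) (hR : ∀ j, extDim (R j) Y = 0) :
    extDim (universalExtension X R) Y = 0 :=
  extDim_extension_left hXY (extDim_pi_left fun p => hR p.1)

theorem extDim_universalExtension_right (hR : ∀ j k, extDim (R j) (R k) = 0) (j : ι) :
    extDim (R j) (universalExtension X R) = 0 := by
  classical
  refine extDim_extension_right (extDim_pi_right fun p => hR j p.1) fun η => ?_
  let b := fun k => Module.finBasis K (∀ a, (R k).sp (t a) →ₗ[K] X.sp (h a))
  let ι' := fun p => homSingle (fun p : CocycleIndex X R => R p.1) p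
  have glue_single : ∀ a (p : CocycleIndex X R) x,
      ∑ q : CocycleIndex X R, b q.1 q.2 a ((ι' p).1 (t a) x q) = b p.1 p.2 a x := fun a p x =>
    (LinearMap.sum_apply _ _ _).symm.trans
      (LinearMap.lsum_piSingle K _ K (fun q : CocycleIndex X R => b q.1 q.2 a) p x)
  refine ⟨∑ k, (b j).repr η k • ι' ⟨j, k⟩, fun a => ?_⟩
  calc _ = ∑ k, (b j).repr η k • b j k a := by
        ext x
        simp only [Submodule.coe_sum, Submodule.coe_smul, Finset.sum_apply, Pi.smul_apply,
          LinearMap.comp_apply, LinearMap.sum_apply, LinearMap.smul_apply, map_sum, map_smul]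
        exact Finset.sum_congr rfl fun k _ => congrArg _ (glue_single a ⟨j, k⟩ x)
    _ = (∑ k, (b j).repr η k • b j k) a := by rw [Finset.sum_apply]; rfl
    _ = η a := by rw [(b j).sum_repr]

theorem exists_homS_universalExtension_ne_zero (hR : ∀ j, extDim (R j) Y = 0) {f : homS X Y}
    (hf : f ≠ 0) : ∃ F : homS (universalExtension X R) Y, F ≠ 0 :=
  exists_homS_extension_ne_zero (extDim_pi_left fun p => hR p.1) hf

theorem dimVec_universalExtension_eq_zero {i : V} (hX : X.dimVec i = 0)
    (hR : ∀ j, (R j).dimVec i = 0) : (universalExtension X R).dimVec i = 0 := by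
  have : Subsingleton (X.sp i) := Module.finrank_zero_iff.mp hX
  have : ∀ j, Subsingleton ((R j).sp i) := fun j => Module.finrank_zero_iff.mp (hR j)
  exact Module.finrank_zero_iff.mpr inferInstance

end UniversalExtension

end QuivRep

section Path

omit [Fintype V] [DecidableEq V] [Fintype A]

variable {t h : A → V}

theorem isPathFrom_append {i j : V} {p q : List A} :
    IsPathFrom t h i (p ++ q) j ↔ ∃ k, IsPathFrom t h i p k ∧ IsPathFrom t h k q j := by
  induction p generalizing i with
  | nil => simp only [List.nil_append, IsPathFrom, exists_eq_left']
  | cons a p ih => simp only [List.cons_append, IsPathFrom, ih, and_assoc, exists_and_left]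

theorem isPathFrom_concat {i j : V} {p : List A} {a : A} :
    IsPathFrom t h i (p ++ [a]) j ↔ IsPathFrom t h i p (t a) ∧ h a = j := by
  simp only [isPathFrom_append, IsPathFrom, ← and_assoc, exists_and_right, exists_eq_right']

theorem Acyclic.nodup_of_isPathFrom (hQ : Acyclic t h) {i j : V} {p : List A}
    (hp : IsPathFrom t h i p j) : p.Nodup := by
  induction p generalizing i with
  | nil => exact List.nodup_nil
  | cons a p ih =>
    refine List.nodup_cons.mpr ⟨fun ha => ?_, ih hp.2⟩
    obtain ⟨p₁, p₂, rfl⟩ := List.append_of_mem ha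
    obtain ⟨k, hp₁, rfl, -⟩ := isPathFrom_append.mp hp.2
    exact List.cons_ne_nil a p₁ (hQ (t a) (a :: p₁) ⟨rfl, hp₁⟩)

theorem Acyclic.finite_setOf_isPathFrom [Finite A] (hQ : Acyclic t h) (i j : V) :
    {p | IsPathFrom t h i p j}.Finite := by
  classical
  have := Fintype.ofFinite A
  have hnodup : {p : List A | p.Nodup}.Finite :=
    Set.finite_coe_iff.mp (Finite.of_fintype {p : List A // p.Nodup})
  exact hnodup.subset fun p hp => hQ.nodup_of_isPathFrom hp

/-- The paths starting at `v` none of whose arrows has its head in `I`, indexed by their end. -/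
inductive PathAvoiding (t h : A → V) (I : Set V) (v : V) : V → Type
  | nil : PathAvoiding t h I v v
  | concat (a : A) (ha : h a ∉ I) (p : PathAvoiding t h I v (t a)) : PathAvoiding t h I v (h a)

namespace PathAvoiding

variable {I : Set V} {v : V}

/-- The list of arrows of a path. -/
def toList : ∀ {j : V}, PathAvoiding t h I v j → List A
  | _, nil => []
  | _, concat a _ p => p.toList ++ [a]

theorem isPathFrom_toList {j : V} (p : PathAvoiding t h I v j) :
    IsPathFrom t h v p.toList j := by
  induction p with
  | nil => rfl
  | concat a _ p ih => exact isPathFrom_concat.mpr ⟨ih, rfl⟩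

theorem toList_injective (j : V) :
    Function.Injective (toList : PathAvoiding t h I v j → List A) := by
  suffices ∀ {j k} (p : PathAvoiding t h I v j) (q : PathAvoiding t h I v k),
      p.toList = q.toList → (⟨j, p⟩ : Σ j, PathAvoiding t h I v j) = ⟨k, q⟩ from
    fun p q hpq => sigma_mk_injective (this p q hpq)
  intro j k p q hpq
  induction p generalizing k with
  | nil =>
    cases q with
    | nil => rfl
    | concat b hb q => exact absurd hpq (List.append_ne_nil_of_right_ne_nil _ (by simp)).symm
  | concat a ha p ih =>
    cases q with
    | nil => exact absurd hpq (List.append_ne_nil_of_right_ne_nil _ (by simp))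
    | concat b hb q =>
      obtain ⟨hpq, hab⟩ := List.append_inj' hpq rfl
      obtain rfl := List.singleton_inj.mp hab
      obtain rfl := sigma_mk_injective (ih q hpq)
      rfl

theorem exists_toList_eq {j : V} {p : List A} (hp : IsPathFrom t h v p j) :
    ∃ q : PathAvoiding t h ∅ v j, q.toList = p := by
  induction p using List.reverseRecOn generalizing j with
  | nil =>
    obtain rfl : v = j := hp
    exact ⟨nil, rfl⟩
  | append_singleton p a ih =>
    obtain ⟨hpa, rfl⟩ := isPathFrom_concat.mp hp
    obtain ⟨q, rfl⟩ := ih hpa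
    exact ⟨concat a (Set.notMem_empty _) q, rfl⟩

theorem finite [Finite A] (hQ : Acyclic t h) (j : V) : Finite (PathAvoiding t h I v j) :=
  (Set.finite_range_iff (toList_injective j)).mp <|
    (hQ.finite_setOf_isPathFrom v j).subset (Set.range_subset_iff.mpr isPathFrom_toList)

theorem natCard_eq_gammaRoot (v j : V) :
    Nat.card (PathAvoiding t h ∅ v j) = gammaRoot t h v j := by
  have hrange : Set.range (toList : PathAvoiding t h ∅ v j → List A) =
      {p | IsPathFrom t h v p j} :=
    Set.Subset.antisymm (Set.range_subset_iff.mpr isPathFrom_toList) fun _ => exists_toList_eq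
  rw [gammaRoot, ← hrange, ← Nat.card_coe_set_eq, Nat.card_range_of_injective (toList_injective j)]

theorem gammaRoot_self_pos [Finite A] (hQ : Acyclic t h) (v : V) : 0 < gammaRoot t h v v := by
  have := finite hQ (I := ∅) (v := v) v
  have : Nonempty (PathAvoiding t h ∅ v v) := ⟨nil⟩
  exact natCard_eq_gammaRoot (t := t) (h := h) v v ▸ Nat.card_pos

end PathAvoiding

end Path

namespace QuivRep

open Function

section Projective

omit [Fintype V] [DecidableEq V] [Fintype A]

variable {K} {t h : A → V} [Finite A] {hQ : Acyclic t h} {I : Set V} {v : V}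
  {Y : QuivRep K V A t h}

open Classical in
/-- The indecomposable projective at `v` of the quiver with the vertices in `I` removed (for
`v ∉ I`), extended by zero to the whole quiver. -/
abbrev projective (K : Type) [Field K] (hQ : Acyclic t h) (I : Set V) (v : V) :
    QuivRep K V A t h where
  sp j := PathAvoiding t h I v j →₀ K
  inst3 j := have := PathAvoiding.finite hQ (I := I) (v := v) j; inferInstance
  map a := if ha : h a ∈ I then 0 else Finsupp.lmapDomain K K (PathAvoiding.concat a ha)

theorem projective_map_single {a : A} (ha : h a ∉ I) (p : PathAvoiding t h I v (t a)) (r : K) :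
    (projective K hQ I v).map a (Finsupp.single p r) = Finsupp.single (p.concat a ha) r := by
  simp only [dif_neg ha, Finsupp.lmapDomain_apply, Finsupp.mapDomain_single]

/-- The values, on the basis of paths, of the solution `φ` of the Ext equation with right-hand side
`c` for `projective` and with value `y` on the trivial path. -/
def pathSolution (Y : QuivRep K V A t h)
    (c : ∀ a, (PathAvoiding t h I v (t a) →₀ K) →ₗ[K] Y.sp (h a)) (y : Y.sp v) :
    ∀ {j : V}, PathAvoiding t h I v j → Y.sp j
  | _, .nil => y
  | _, .concat a _ p => Y.map a (pathSolution Y c y p) + c a (Finsupp.single p 1)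

theorem exists_solution_projective (hY : ∀ i ∈ I, Y.dimVec i = 0)
    (c : ∀ a, (projective K hQ I v).sp (t a) →ₗ[K] Y.sp (h a)) (y : Y.sp v) :
    ∃ φ : ∀ i, (projective K hQ I v).sp i →ₗ[K] Y.sp i,
      (∀ a x, φ (h a) ((projective K hQ I v).map a x) - Y.map a (φ (t a) x) = c a x) ∧
      φ v (Finsupp.single .nil 1) = y := by
  let φ i : (projective K hQ I v).sp i →ₗ[K] Y.sp i :=
    Finsupp.linearCombination K (pathSolution Y c y)
  have hφ {j} (p : PathAvoiding t h I v j) : φ j (Finsupp.single p 1) = pathSolution Y c y p := by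
    rw [Finsupp.linearCombination_single, one_smul]
  refine ⟨φ, fun a => ?_, hφ _⟩
  by_cases ha : h a ∈ I
  · have : Subsingleton (Y.sp (h a)) := Module.finrank_zero_iff.mp (hY _ ha)
    exact fun x => Subsingleton.elim _ _
  · have hφa : φ (h a) ∘ₗ (projective K hQ I v).map a - Y.map a ∘ₗ φ (t a) = c a := by
      refine Finsupp.lhom_ext' fun p => LinearMap.ext_ring ?_
      change φ (h a) ((projective K hQ I v).map a (Finsupp.single p 1)) -
        Y.map a (φ (t a) (Finsupp.single p 1)) = c a (Finsupp.single p 1)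
      rw [projective_map_single ha, hφ, hφ]
      exact add_sub_cancel_left _ _
    exact LinearMap.congr_fun hφa

theorem extDim_projective (hY : ∀ i ∈ I, Y.dimVec i = 0) : extDim (projective K hQ I v) Y = 0 :=
  extDim_eq_zero_iff.mpr fun c => (exists_solution_projective hY c 0).imp fun _ => And.left

theorem homS_projective_ext {f g : homS (projective K hQ I v) Y}
    (hfg : f.1 v (Finsupp.single .nil 1) = g.1 v (Finsupp.single .nil 1)) : f = g := by
  refine Subtype.ext (funext fun j => Finsupp.lhom_ext' fun p => LinearMap.ext_ring ?_)
  induction p with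
  | nil => exact hfg
  | concat a ha p ih =>
    change f.1 (h a) (Finsupp.single (p.concat a ha) 1) =
      g.1 (h a) (Finsupp.single (p.concat a ha) 1)
    rw [← projective_map_single (hQ := hQ) ha, homS_apply_map, homS_apply_map]
    exact congrArg _ ih

theorem homDim_projective (hY : ∀ i ∈ I, Y.dimVec i = 0) :
    homDim (projective K hQ I v) Y = Y.dimVec v := by
  let eval : homS (projective K hQ I v) Y →ₗ[K] Y.sp v :=
    LinearMap.applyₗ (Finsupp.single .nil 1) ∘ₗ LinearMap.proj v ∘ₗ Submodule.subtype _
  refine (LinearEquiv.ofBijective eval ⟨fun f g => homS_projective_ext, fun y => ?_⟩).finrank_eq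
  obtain ⟨φ, hφ, hφy⟩ := exists_solution_projective hY 0 y
  exact ⟨⟨φ, mem_homS_iff.mpr fun a x => sub_eq_zero.mp (hφ a x)⟩, hφy⟩

theorem dimVec_projective_eq_zero (hv : v ∉ I) {i : V} (hi : i ∈ I) :
    (projective K hQ I v).dimVec i = 0 := by
  have : IsEmpty (PathAvoiding t h I v i) := ⟨fun p => by
    cases p with
    | nil => exact hv hi
    | concat a ha p => exact ha hi⟩
  exact Module.finrank_zero_iff.mpr inferInstance

theorem dimVec_projective_empty (v : V) : (projective K hQ ∅ v).dimVec = gammaRoot t h v := by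
  funext j
  have := PathAvoiding.finite hQ (I := ∅) (v := v) j
  have := Fintype.ofFinite (PathAvoiding t h ∅ v j)
  rw [← PathAvoiding.natCard_eq_gammaRoot, Nat.card_eq_fintype_card]
  exact Module.finrank_finsupp_self K

end Projective

section CompatibleSource

omit [Fintype V] [DecidableEq V] [Fintype A]

variable {K} {t h : A → V} {ι : Type} {R : ι → QuivRep K V A t h} {I : Set V}
  {W Z : QuivRep K V A t h}

/-- A rigid representation `Z` that is compatible with the representations `R j` and with the
negative roots `-γ_i`, `i ∈ I`, and which has a nonzero morphism to `W` but no extension by `W`. -/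
structure IsCompatibleSource (R : ι → QuivRep K V A t h) (I : Set V) (W Z : QuivRep K V A t h) :
    Prop where
  isRigid : IsRigid Z
  extDim_left : ∀ j, extDim Z (R j) = 0
  extDim_right : ∀ j, extDim (R j) Z = 0
  dimVec_eq_zero : ∀ i ∈ I, Z.dimVec i = 0
  extDim_target : extDim Z W = 0
  exists_homS_ne_zero : ∃ φ : homS Z W, φ ≠ 0

theorem IsCompatibleSource.dimVec_ne_zero (hZ : IsCompatibleSource R I W Z) : Z.dimVec ≠ 0 := by
  obtain ⟨φ, hφ⟩ := hZ.exists_homS_ne_zero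
  obtain ⟨v, x, hx⟩ := exists_apply_ne_zero_of_homS_ne_zero hφ
  intro hdim
  have : Subsingleton (Z.sp v) := Module.finrank_zero_iff.mp (congrFun hdim v)
  exact hx (by rw [Subsingleton.elim x 0, map_zero])

variable [Finite A]

theorem exists_isCompatibleSource [Finite ι] (hQ : Acyclic t h)
    (hR : ∀ j k, extDim (R j) (R k) = 0) (hRI : ∀ j, ∀ i ∈ I, (R j).dimVec i = 0)
    (hRW : ∀ j, extDim (R j) W = 0) (hWI : ∀ i ∈ I, W.dimVec i = 0) (hW : W.dimVec ≠ 0) :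
    ∃ Z, IsCompatibleSource R I W Z := by
  have := Fintype.ofFinite ι
  obtain ⟨v, hv⟩ := ne_iff.mp hW
  have hvI : v ∉ I := fun hvI => hv (hWI v hvI)
  let P := projective K hQ I v
  obtain ⟨f, hf⟩ := exists_ne_zero_of_homDim_ne_zero (X := P) (Y := W)
    (by rwa [homDim_projective hWI])
  have hZI : ∀ i ∈ I, (universalExtension P R).dimVec i = 0 := fun i hi =>
    dimVec_universalExtension_eq_zero (dimVec_projective_eq_zero hvI hi) fun j => hRI j i hi
  have hRZ : ∀ j, extDim (R j) (universalExtension P R) = 0 := extDim_universalExtension_right hR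
  exact ⟨universalExtension P R,
    { isRigid := extDim_universalExtension_left (extDim_projective hZI) hRZ
      extDim_left := fun j =>
        extDim_universalExtension_left (extDim_projective (hRI j)) fun k => hR k j
      extDim_right := hRZ
      dimVec_eq_zero := hZI
      extDim_target := extDim_universalExtension_left (extDim_projective hWI) hRW
      exists_homS_ne_zero := exists_homS_universalExtension_ne_zero hRW hf }⟩

theorem IsCompatibleSource.image (hZ : IsCompatibleSource R I W Z) (f : homS Z Z) {φ : homS Z W}
    (hφf : homComp φ f ≠ 0) : IsCompatibleSource R I W (image f) where
  isRigid := extDim_eq_zero_of_injective _ (imageIncl_injective f)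
    (extDim_eq_zero_of_surjective _ (imageProj_surjective f) hZ.isRigid)
  extDim_left j := extDim_eq_zero_of_injective _ (imageIncl_injective f) (hZ.extDim_left j)
  extDim_right j := extDim_eq_zero_of_surjective _ (imageProj_surjective f) (hZ.extDim_right j)
  dimVec_eq_zero i hi := Nat.eq_zero_of_le_zero (hZ.dimVec_eq_zero i hi ▸ dimVec_image_le f i)
  extDim_target := extDim_eq_zero_of_injective _ (imageIncl_injective f) hZ.extDim_target
  exists_homS_ne_zero := by
    obtain ⟨v, x, hx⟩ := exists_apply_ne_zero_of_homS_ne_zero hφf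
    exact ⟨homComp φ (imageIncl f),
      homS_ne_zero_of_apply_ne_zero (x := (imageProj f).1 v x) hx⟩

theorem homComp_eq_zero_of_minimal (hZ : MinimalFor (IsCompatibleSource R I W) dimVec Z)
    {f : homS Z Z} (hf : ¬∀ v, Injective (f.1 v)) (φ : homS Z W) : homComp φ f = 0 := by
  contrapose! hf
  have hle : Z.dimVec ≤ (image f).dimVec := hZ.2 (hZ.1.image f hf) (dimVec_image_le f)
  exact fun v => injective_of_dimVec_image_eq (congrFun (le_antisymm (dimVec_image_le f) hle) v)

theorem hasLocalEnd_of_minimal (hZ : MinimalFor (IsCompatibleSource R I W) dimVec Z) :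
    HasLocalEnd Z := by
  intro f
  by_contra! hcon
  obtain ⟨φ, hφ⟩ := hZ.1.exists_homS_ne_zero
  have hφf := homComp_eq_zero_of_minimal hZ (f := f) (by simpa using hcon.1) φ
  have hφf' := homComp_eq_zero_of_minimal hZ (f := homId Z - f) (by simpa using hcon.2) φ
  apply hφ
  calc φ = homComp φ f + homComp φ (homId Z - f) :=
        Subtype.ext (funext fun v => LinearMap.ext fun x => by
          change φ.1 v x = φ.1 v (f.1 v x) + φ.1 v (x - f.1 v x)
          rw [← map_add, add_sub_cancel])
    _ = 0 := by rw [hφf, hφf', add_zero]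

theorem isExceptional_of_minimal [Finite V]
    (hZ : MinimalFor (IsCompatibleSource R I W) dimVec Z) : IsExceptional Z :=
  have hlocal := hasLocalEnd_of_minimal hZ
  ⟨hZ.1.isRigid, isSchur_of_injective_of_extDim_eq_zero hZ.1.dimVec_ne_zero
    (fun _ hf v => (bijective_of_dimVec_eq hlocal hlocal hZ.1.isRigid rfl hf v).injective)
    hZ.1.isRigid⟩

theorem IsCompatibleSource.exists_isExceptional [Finite V] (hZ : IsCompatibleSource R I W Z) :
    ∃ Z', IsCompatibleSource R I W Z' ∧ IsExceptional Z' :=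
  have ⟨Z', hZ'⟩ := exists_minimalFor_of_wellFoundedLT (IsCompatibleSource R I W) dimVec ⟨Z, hZ⟩
  ⟨Z', hZ'.1, isExceptional_of_minimal hZ'⟩

end CompatibleSource

section Realization

omit [Fintype V] [DecidableEq V] [Fintype A]

variable [Finite A] {K} {t h : A → V} {ι : Type} {R : ι → QuivRep K V A t h} {I : Set V}
  {C : Finset (V → ℤ)} {W Z : QuivRep K V A t h}

/-- The negative root `-γ_i`. -/
def negGammaRoot (t h : A → V) (i : V) : V → ℤ :=
  fun j => -(gammaRoot t h i j : ℤ)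

theorem natZ_injective : Injective (natZ : (V → ℕ) → V → ℤ) :=
  fun _ _ hxy => funext fun i => Nat.cast_injective (congrFun hxy i)

theorem natZ_ne_negGammaRoot (hQ : Acyclic t h) (β : V → ℕ) (i : V) :
    natZ β ≠ negGammaRoot t h i := by
  intro heq
  have hβ : (β i : ℤ) = -(gammaRoot t h i i : ℤ) := congrFun heq i
  have hγ := PathAvoiding.gammaRoot_self_pos hQ i
  lia

/-- The exceptional representations `R j` and the vertices in `I` realize the almost positive roots
in `C`: its elements are the `dim R j` and the `-γ_i`, `i ∈ I`, and they are pairwise compatible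
already on the level of the chosen representations. -/
structure Realizes (R : ι → QuivRep K V A t h) (I : Set V) (C : Finset (V → ℤ)) : Prop where
  isExceptional : ∀ j, IsExceptional (R j)
  dimVec_mem : ∀ j, natZ (R j).dimVec ∈ C
  negGammaRoot_mem_iff : ∀ i, negGammaRoot t h i ∈ C ↔ i ∈ I
  exists_of_mem : ∀ c ∈ C, (∃ j, natZ (R j).dimVec = c) ∨ ∃ i, negGammaRoot t h i = c
  extDim_eq_zero : ∀ j k, extDim (R j) (R k) = 0
  dimVec_eq_zero : ∀ j, ∀ i ∈ I, (R j).dimVec i = 0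

theorem _root_.IsCompatible.exists_realizes [Finite V] [Infinite K] (hC : IsCompatible K t h C)
    (hQ : Acyclic t h) :
    ∃ (ι : Type) (_ : Finite ι) (R : ι → QuivRep K V A t h) (I : Set V), Realizes R I C := by
  let ι := {β : V → ℕ // isRealSchurRoot K t h β ∧ natZ β ∈ C}
  have hfin : Finite ι :=
    Finite.of_injective (fun β => (⟨natZ β.1, β.2.2⟩ : C)) fun β γ hβγ =>
      Subtype.ext (natZ_injective (congrArg Subtype.val hβγ))
  choose R hRdim hRexc using fun β : ι => β.2.1
  refine ⟨ι, hfin, R, {i | negGammaRoot t h i ∈ C}, hRexc, fun β => hRdim β ▸ β.2.2,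
    fun i => Iff.rfl, fun c hc => ?_, fun β γ => ?_, fun β i hi => ?_⟩
  · rcases hC.1 c hc with ⟨β, hβ, rfl⟩ | ⟨i, rfl⟩
    · exact .inl ⟨⟨β, hβ, hc⟩, congrArg natZ (hRdim _)⟩
    · exact .inr ⟨i, rfl⟩
  · rcases eq_or_ne β γ with rfl | hβγ
    · exact (hRexc β).1
    · rw [← (hRexc β).extMin_eq_zero_iff (hRexc γ), hRdim, hRdim]
      exact (hC.2 _ β.2.2 _ γ.2.2 fun heq => hβγ (Subtype.ext (natZ_injective heq))).1 _ _
        β.2.1 γ.2.1 rfl rfl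
  · rw [hRdim]
    exact (hC.2 _ β.2.2 _ hi (natZ_ne_negGammaRoot hQ _ _)).2 _ _ β.2.1 rfl rfl

namespace Realizes

theorem exists_dimVec_eq (hR : Realizes R I C) (hQ : Acyclic t h) {β : V → ℕ}
    (hβ : natZ β ∈ C) : ∃ j, (R j).dimVec = β := by
  rcases hR.exists_of_mem _ hβ with ⟨j, hj⟩ | ⟨i, hi⟩
  · exact ⟨j, natZ_injective hj⟩
  · exact absurd hi.symm (natZ_ne_negGammaRoot hQ β i)

theorem isCompatible [Finite V] [Infinite K] (hR : Realizes R I C) (hQ : Acyclic t h) :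
    IsCompatible K t h C := by
  refine ⟨fun x hx => ?_, fun x hx y hy hxy => ⟨?_, ?_⟩⟩
  · exact (hR.exists_of_mem x hx).imp
      (fun ⟨j, hj⟩ => ⟨_, ⟨R j, rfl, hR.isExceptional j⟩, hj.symm⟩) fun ⟨i, hi⟩ => ⟨i, hi.symm⟩
  · rintro β₁ β₂ - - rfl rfl
    obtain ⟨j, rfl⟩ := hR.exists_dimVec_eq hQ hx
    obtain ⟨k, rfl⟩ := hR.exists_dimVec_eq hQ hy
    exact ((hR.isExceptional j).extMin_eq_zero_iff (hR.isExceptional k)).mpr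
      (hR.extDim_eq_zero j k)
  · rintro β i - rfl rfl
    obtain ⟨j, rfl⟩ := hR.exists_dimVec_eq hQ hx
    exact hR.dimVec_eq_zero j i ((hR.negGammaRoot_mem_iff i).mp hy)

theorem insert [DecidableEq (V → ℤ)] (hR : Realizes R I C) (hQ : Acyclic t h)
    (hZ : IsCompatibleSource R I W Z) (hexc : IsExceptional Z) :
    Realizes (fun j : Option ι => j.elim Z R) I (Insert.insert (natZ Z.dimVec) C) where
  isExceptional j := by cases j; exacts [hexc, hR.isExceptional _]
  dimVec_mem j := by
    cases j
    exacts [Finset.mem_insert_self _ _, Finset.mem_insert_of_mem (hR.dimVec_mem _)]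
  negGammaRoot_mem_iff i := by
    rw [Finset.mem_insert, or_iff_right (natZ_ne_negGammaRoot hQ _ _).symm,
      hR.negGammaRoot_mem_iff]
  exists_of_mem c hc := by
    rcases Finset.mem_insert.mp hc with rfl | hc
    · exact .inl ⟨none, rfl⟩
    · exact (hR.exists_of_mem c hc).imp_left fun ⟨j, hj⟩ => ⟨some j, hj⟩
  extDim_eq_zero j k := by
    cases j <;> cases k
    exacts [hZ.isRigid, hZ.extDim_left _, hZ.extDim_right _, hR.extDim_eq_zero _ _]
  dimVec_eq_zero j := by cases j; exacts [hZ.dimVec_eq_zero, hR.dimVec_eq_zero _]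

end Realizes

end Realization

section EulerFormOfRealization

omit [DecidableEq V]

variable {K} {t h : A → V} {ι : Type} {R : ι → QuivRep K V A t h} {I : Set V}
  {C : Finset (V → ℤ)} {W Y Z : QuivRep K V A t h}

theorem eulerForm_negGammaRoot (hQ : Acyclic t h) (i : V) (Y : QuivRep K V A t h) :
    eulerForm t h (negGammaRoot t h i) (natZ Y.dimVec) = -(Y.dimVec i : ℤ) := by
  calc eulerForm t h (negGammaRoot t h i) (natZ Y.dimVec)
      = -eulerForm t h (natZ (gammaRoot t h i)) (natZ Y.dimVec) := by
        simp only [eulerForm, negGammaRoot, natZ, neg_mul, Finset.sum_neg_distrib, neg_sub_neg,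
          neg_sub]
    _ = -(Y.dimVec i : ℤ) := by
        rw [← dimVec_projective_empty (K := K) (hQ := hQ), eulerForm_eq_homDim_sub_extDim,
          homDim_projective (by simp), extDim_projective (by simp), Nat.cast_zero, sub_zero]

namespace Realizes

theorem eulerForm_nonneg (hR : Realizes R I C) (hQ : Acyclic t h) (hRY : ∀ j, extDim (R j) Y = 0)
    (hYI : ∀ i ∈ I, Y.dimVec i = 0) {c : V → ℤ} (hc : c ∈ C) :
    0 ≤ eulerForm t h c (natZ Y.dimVec) := by
  rcases hR.exists_of_mem c hc with ⟨j, rfl⟩ | ⟨i, rfl⟩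
  · rw [eulerForm_eq_homDim_sub_extDim, hRY, Nat.cast_zero, sub_zero]
    exact Int.natCast_nonneg _
  · rw [eulerForm_negGammaRoot hQ, hYI i ((hR.negGammaRoot_mem_iff i).mp hc), Nat.cast_zero,
      neg_zero]

theorem eulerForm_nonpos (hR : Realizes R I C) (hQ : Acyclic t h) (hRY : ∀ j, homDim (R j) Y = 0)
    {c : V → ℤ} (hc : c ∈ C) : eulerForm t h c (natZ Y.dimVec) ≤ 0 := by
  rcases hR.exists_of_mem c hc with ⟨j, rfl⟩ | ⟨i, rfl⟩
  · rw [eulerForm_eq_homDim_sub_extDim, hRY]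
    lia
  · rw [eulerForm_negGammaRoot hQ]
    lia

end Realizes

theorem IsCompatibleSource.eulerForm_pos (hZ : IsCompatibleSource R I W Z) :
    0 < eulerForm t h (natZ Z.dimVec) (natZ W.dimVec) := by
  obtain ⟨φ, hφ⟩ := hZ.exists_homS_ne_zero
  rw [eulerForm_eq_homDim_sub_extDim, hZ.extDim_target, Nat.cast_zero, sub_zero, Int.natCast_pos]
  exact homDim_pos_of_ne_zero hφ

end EulerFormOfRealization

section Semistability

variable {K} {t h : A → V} {ι : Type} {R : ι → QuivRep K V A t h} {I : Set V}
  {C : Finset (V → ℤ)} {lam : (V → ℤ) → ℤ} {W : QuivRep K V A t h}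

theorem sum_weightL_mul (α d : V → ℤ) : ∑ i, weightL t h α i * d i = eulerForm t h α d := by
  simp only [weightL, eulerForm, mul_ite, mul_one, mul_zero, Finset.sum_ite_eq', Finset.mem_univ,
    if_true, sub_mul, Finset.sum_sub_distrib, Finset.sum_mul, ite_mul, zero_mul]
  rw [Finset.sum_comm]
  simp only [Finset.sum_ite_eq, Finset.mem_univ, if_true]

namespace Realizes

theorem homDim_eq_zero_of_isSemistable (hR : Realizes R I C) (hQ : Acyclic t h)
    (hlam : ∀ c ∈ C, 0 < lam c)
    (hW : IsSemistable K (weightL t h (∑ c ∈ C, lam c • c)) W) (j : ι) : homDim (R j) W = 0 := by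
  by_contra hhom
  obtain ⟨f, hf⟩ := exists_ne_zero_of_homDim_ne_zero hhom
  obtain ⟨v, x, hx⟩ := exists_apply_ne_zero_of_homS_ne_zero hf
  have ext_image : ∀ k, extDim (R k) (image f) = 0 := fun k =>
    extDim_eq_zero_of_surjective _ (imageProj_surjective f) (hR.extDim_eq_zero k j)
  have image_supp : ∀ i ∈ I, (image f).dimVec i = 0 := fun i hi =>
    Nat.eq_zero_of_le_zero (hR.dimVec_eq_zero j i hi ▸ dimVec_image_le f i)
  have proj_ne_zero : imageProj f ≠ 0 :=
    homS_ne_zero_of_apply_ne_zero fun hx0 => hx (congrArg Subtype.val hx0)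
  have image_nonpos : ∑ c ∈ C, lam c * eulerForm t h c (natZ (image f).dimVec) ≤ 0 := by
    rw [← eulerForm_sum_smul_left, ← sum_weightL_mul]
    exact hW.2 ⟨fun i => LinearMap.range (f.1 i), fun a _ ⟨x, hx⟩ =>
      ⟨(R j).map a x, hx ▸ homS_apply_map f a x⟩⟩
  refine image_nonpos.not_gt (Finset.sum_pos' (fun c hc => ?_)
    ⟨_, hR.dimVec_mem j, mul_pos (hlam _ (hR.dimVec_mem j)) ?_⟩)
  · exact mul_nonneg (hlam c hc).le (hR.eulerForm_nonneg hQ ext_image image_supp hc)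
  · rw [eulerForm_eq_homDim_sub_extDim, ext_image, Nat.cast_zero, sub_zero, Int.natCast_pos]
    exact homDim_pos_of_ne_zero proj_ne_zero

theorem eulerForm_eq_zero_of_isSemistable (hR : Realizes R I C) (hQ : Acyclic t h)
    (hlam : ∀ c ∈ C, 0 < lam c)
    (hW : IsSemistable K (weightL t h (∑ c ∈ C, lam c • c)) W) :
    ∀ c ∈ C, eulerForm t h c (natZ W.dimVec) = 0 := by
  have hsum : ∑ c ∈ C, lam c * eulerForm t h c (natZ W.dimVec) = 0 := by
    rw [← eulerForm_sum_smul_left, ← sum_weightL_mul]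
    exact hW.1
  have hterm : ∀ c ∈ C, lam c * eulerForm t h c (natZ W.dimVec) = 0 :=
    (Finset.sum_eq_zero_iff_of_nonpos fun c hc => mul_nonpos_of_nonneg_of_nonpos (hlam c hc).le
      (hR.eulerForm_nonpos hQ (hR.homDim_eq_zero_of_isSemistable hQ hlam hW) hc)).mp hsum
  exact fun c hc => (mul_eq_zero.mp (hterm c hc)).resolve_left (hlam c hc).ne'

theorem extDim_eq_zero_of_isSemistable (hR : Realizes R I C) (hQ : Acyclic t h)
    (hlam : ∀ c ∈ C, 0 < lam c)
    (hW : IsSemistable K (weightL t h (∑ c ∈ C, lam c • c)) W) (j : ι) : extDim (R j) W = 0 := by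
  have hRW := hR.eulerForm_eq_zero_of_isSemistable hQ hlam hW _ (hR.dimVec_mem j)
  rw [eulerForm_eq_homDim_sub_extDim, hR.homDim_eq_zero_of_isSemistable hQ hlam hW] at hRW
  lia

theorem dimVec_eq_zero_of_isSemistable (hR : Realizes R I C) (hQ : Acyclic t h)
    (hlam : ∀ c ∈ C, 0 < lam c)
    (hW : IsSemistable K (weightL t h (∑ c ∈ C, lam c • c)) W) : ∀ i ∈ I, W.dimVec i = 0 := by
  intro i hi
  have hiW := hR.eulerForm_eq_zero_of_isSemistable hQ hlam hW _ ((hR.negGammaRoot_mem_iff i).mpr hi)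
  rw [eulerForm_negGammaRoot hQ] at hiW
  lia

end Realizes

end Semistability

end QuivRep

theorem stmt16_general [Infinite K] (t h : A → V) (hQ : Acyclic t h)
    (C : Finset (V → ℤ)) (hC : IsCompatible K t h C)
    (hmax : ∀ C' : Finset (V → ℤ), IsCompatible K t h C' → C ⊆ C' → C' = C)
    (lam : (V → ℤ) → ℤ) (hlam : ∀ c ∈ C, 0 < lam c)
    (α : V → ℤ) (hα : α = ∑ c ∈ C, lam c • c)
    (W : QuivRep K V A t h) (hW : IsSemistable K (weightL t h α) W) :
    W.dimVec = fun _ => 0 := by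
  subst hα
  by_contra hW0
  obtain ⟨ι, _, R, I, hR⟩ := hC.exists_realizes hQ
  obtain ⟨Z₀, hZ₀⟩ := QuivRep.exists_isCompatibleSource hQ hR.extDim_eq_zero hR.dimVec_eq_zero
    (hR.extDim_eq_zero_of_isSemistable hQ hlam hW)
    (hR.dimVec_eq_zero_of_isSemistable hQ hlam hW) hW0
  obtain ⟨Z, hZ, hexc⟩ := hZ₀.exists_isExceptional
  have insert_eq : insert (natZ Z.dimVec) C = C :=
    hmax _ ((hR.insert hQ hZ hexc).isCompatible hQ) (Finset.subset_insert _ _)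
  have dimVec_mem : natZ Z.dimVec ∈ C := insert_eq ▸ Finset.mem_insert_self _ _
  exact hZ.eulerForm_pos.ne' (hR.eulerForm_eq_zero_of_isSemistable hQ hlam hW _ dimVec_mem)

/-- If `C` is a cluster (a maximal compatible subset of `Ψ(Q)_{≥ −1}`)
and `α = Σ_{c ∈ C} λ_c c` with all `λ_c` positive integers, then the only
`⟨α,·⟩`-semi-stable representation is the zero representation. -/
theorem stmt16 [IsAlgClosed K] [CharZero K] (t h : A → V) (hQ : Acyclic t h)
    (C : Finset (V → ℤ)) (hC : IsCompatible K t h C)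
    (hmax : ∀ C' : Finset (V → ℤ), IsCompatible K t h C' → C ⊆ C' → C' = C)
    (lam : (V → ℤ) → ℤ) (hlam : ∀ c ∈ C, 0 < lam c)
    (α : V → ℤ) (hα : α = ∑ c ∈ C, lam c • c)
    (W : QuivRep K V A t h) (hW : IsSemistable K (weightL t h α) W) :
    W.dimVec = fun _ => 0 :=
  stmt16_general K t h hQ C hC hmax lam hlam α hα W hW

end
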